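/- arXiv:1504.00354 — 4 statements merged into one kernel-verified Lean document; each statement's English description precedes it below -/
import Mathlib

section
/- Every lattice ordered effect algebra is homogeneous; that is, if E is an effect algebra whose induced partial order ≤ is a lattice, then for all u, v₁, v₂ ∈ E with v₁ ⊥ v₂, u ≤ v₁ ⊕ v₂ and u ≤ (v₁ ⊕ v₂)', there exist u₁ ≤ v₁ and u₂ ≤ v₂ with u = u₁ ⊕ u₂. -/
/-- An effect algebra: a partial commutative, associative operation `oplus`
(with definedness encoded via `Option`), constants `zero` and `one`,
unique orthosupplements, and `a ⊕ 1` defined only for `a = 0`. -/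
structure EffectAlgebra (E : Type*) where
  oplus : E → E → Option E
  zero : E
  one : E
  comm : ∀ a b, oplus a b = oplus b a
  assoc : ∀ a b c ab abc, oplus a b = some ab → oplus ab c = some abc →
    ∃ bc, oplus b c = some bc ∧ oplus a bc = some abc
  compl_exists : ∀ a, ∃ b, oplus a b = some one
  compl_unique : ∀ a b c, oplus a b = some one → oplus a c = some one → b = c
  add_one : ∀ a b, oplus a one = some b → a = zero

namespace EffectAlgebra

variable {E : Type*} (A : EffectAlgebra E)

/-- `a ⊥ b` : the sum `a ⊕ b` is defined. -/
def Perp (a b : E) : Prop := (A.oplus a b).isSome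

/-- `a ≤ b` iff `b = a ⊕ c` for some `c`. -/
def le (a b : E) : Prop := ∃ c, A.oplus a c = some b

/-- The orthosupplement `a'`: the unique `b` with `a ⊕ b = 1`. -/
noncomputable def compl (a : E) : E :=
  @Classical.epsilon E ⟨A.zero⟩ fun b => A.oplus a b = some A.one

/-- `a ⊖ b` : the unique `c` with `b ⊕ c = a` (defined when `b ≤ a`). -/
noncomputable def ominus (a b : E) : E :=
  @Classical.epsilon E ⟨A.zero⟩ fun c => A.oplus b c = some a

/-- Homogeneity. -/
def Homogeneous : Prop :=
  ∀ u v₁ v₂ s, A.oplus v₁ v₂ = some s → A.le u s → A.le u (A.compl s) →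
    ∃ u₁ u₂, A.le u₁ v₁ ∧ A.le u₂ v₂ ∧ A.oplus u₁ u₂ = some u

/-- Riesz decomposition property. -/
def RDP : Prop :=
  ∀ u v₁ v₂ s, A.oplus v₁ v₂ = some s → A.le u s →
    ∃ u₁ u₂, A.le u₁ v₁ ∧ A.le u₂ v₂ ∧ A.oplus u₁ u₂ = some u

/-- The sum `c₁ ⊕ … ⊕ cₙ` of a finite family (a list); `some s` iff the family
is orthogonal with sum `s`. -/
def sumList : List E → Option E
  | [] => some A.zero
  | x :: xs => (sumList xs).bind fun s => A.oplus x s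

/-- The subfamily of `C` indexed by a set of indices `S ⊆ {1,…,n}`. -/
def pickList (C : List E) (S : Finset (Fin C.length)) : List E :=
  (S.sort (· ≤ ·)).map C.get

/-- `C` is an orthogonal cover of `M`. -/
def IsCoverOf (C : List E) (M : Set E) : Prop :=
  (A.sumList C).isSome ∧
    ∀ a ∈ M, ∃ S : Finset (Fin C.length), A.sumList (pickList C S) = some a

/-- `M` is compatible with covers in `X`: every finite subset of `M` has an
orthogonal cover with range contained in `X`. -/
def CompatWithCoversIn (M X : Set E) : Prop :=
  ∀ F : Finset E, ↑F ⊆ M →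
    ∃ C : List E, (∀ c ∈ C, c ∈ X) ∧ A.IsCoverOf C ↑F

/-- `M` is compatible (with covers in `E`). -/
def Compatible (M : Set E) : Prop := A.CompatWithCoversIn M Set.univ

/-- `M` is internally compatible. -/
def InternallyCompatible (M : Set E) : Prop := A.CompatWithCoversIn M M

/-- `D` is a refinement of `C`: a partition `{P i}` of the index set of `D`
with `C i = ⊕_{j ∈ P i} D j`. -/
def IsRefinement (D C : List E) : Prop :=
  ∃ P : Fin C.length → Finset (Fin D.length),
    (∀ i j, i ≠ j → Disjoint (P i) (P j)) ∧
    (∀ k, ∃ i, k ∈ P i) ∧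
    (∀ i, A.sumList (pickList D (P i)) = some (C.get i))

/-- One step of the closure construction `M ↦ M₁`. -/
def closureStep (M : Set E) : Set E :=
  {x | ∃ y ∈ M, A.le x y ∧ A.le x (A.compl y)} ∪
  {z | ∃ y ∈ M, ∃ x, A.le x y ∧ A.le x (A.compl y) ∧ A.oplus x z = some y}

/-- The sets `Mₙ`. -/
def closureSeq (M : Set E) (n : ℕ) : Set E := (A.closureStep)^[n] M

/-- The closure `M̄ = ⋃ₙ Mₙ`. -/
def closure (M : Set E) : Set E := ⋃ n, A.closureSeq M n

/-- `B` is a sub-effect algebra of `E`. -/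
def IsSubEA (B : Set E) : Prop :=
  A.one ∈ B ∧ ∀ a ∈ B, ∀ b ∈ B, A.le b a → A.ominus a b ∈ B

/-- The Riesz decomposition property for (the effect algebra on) a subset `B`. -/
def RDPOn (B : Set E) : Prop :=
  ∀ u v₁ v₂ s, u ∈ B → v₁ ∈ B → v₂ ∈ B → A.oplus v₁ v₂ = some s → A.le u s →
    ∃ u₁ u₂, u₁ ∈ B ∧ u₂ ∈ B ∧ A.le u₁ v₁ ∧ A.le u₂ v₂ ∧ A.oplus u₁ u₂ = some u

/-- Homogeneity for (the effect algebra on) a subset `B`. -/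
def HomogeneousOn (B : Set E) : Prop :=
  ∀ u v₁ v₂ s, u ∈ B → v₁ ∈ B → v₂ ∈ B → A.oplus v₁ v₂ = some s →
    A.le u s → A.le u (A.compl s) →
    ∃ u₁ u₂, u₁ ∈ B ∧ u₂ ∈ B ∧ A.le u₁ v₁ ∧ A.le u₂ v₂ ∧ A.oplus u₁ u₂ = some u

/-- A block: a maximal sub-effect algebra satisfying the Riesz decomposition
property. -/
def IsBlock (B : Set E) : Prop :=
  A.IsSubEA B ∧ A.RDPOn B ∧
    ∀ B', A.IsSubEA B' → A.RDPOn B' → B ⊆ B' → B' = B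

/-- A block of the sub-effect algebra on `F`: a maximal sub-effect algebra of
`F` satisfying the Riesz decomposition property. -/
def IsBlockIn (F B : Set E) : Prop :=
  B ⊆ F ∧ A.IsSubEA B ∧ A.RDPOn B ∧
    ∀ B', B' ⊆ F → A.IsSubEA B' → A.RDPOn B' → B ⊆ B' → B' = B

/-- `a` is sharp: the infimum `a ∧ a'` exists and equals `0`, i.e. every common
lower bound of `a` and `a'` is `0`. -/
def Sharp (a : E) : Prop :=
  ∀ b, A.le b a → A.le b (A.compl a) → b = A.zero

/-- `a` is sharp in the sub-effect algebra on `F`. -/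
def SharpIn (F : Set E) (a : E) : Prop :=
  a ∈ F ∧ ∀ b ∈ F, A.le b a → A.le b (A.compl a) → b = A.zero

/-- `a` is principal. -/
def Principal (a : E) : Prop :=
  ∀ x y s, A.le x a → A.le y a → A.oplus x y = some s → A.le s a

/-- `a` is principal in the sub-effect algebra on `B`. -/
def PrincipalIn (B : Set E) (a : E) : Prop :=
  a ∈ B ∧ ∀ x ∈ B, ∀ y ∈ B, ∀ s, A.le x a → A.le y a →
    A.oplus x y = some s → A.le s a

/-- `a` is central: principal, and every `b` has a unique decomposition
`b = b₁ ⊕ b₂` with `b₁ ≤ a`, `b₂ ≤ a'`. -/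
def Central (a : E) : Prop :=
  A.Principal a ∧ ∀ b, ∃! p : E × E,
    A.le p.1 a ∧ A.le p.2 (A.compl a) ∧ A.oplus p.1 p.2 = some b

/-- `a` is central in the sub-effect algebra on `B`. -/
def CentralIn (B : Set E) (a : E) : Prop :=
  A.PrincipalIn B a ∧ ∀ b ∈ B, ∃! p : E × E,
    p.1 ∈ B ∧ p.2 ∈ B ∧ A.le p.1 a ∧ A.le p.2 (A.compl a) ∧
      A.oplus p.1 p.2 = some b

/-- The center `C(E)`. -/
def center : Set E := {a | A.Central a}

/-- The compatibility center `K(E)`: the intersection of all blocks. -/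
def compatCenter : Set E := {x | ∀ B, A.IsBlock B → x ∈ B}

end EffectAlgebra

theorem EffectAlgebra.cancel_left_aux {E : Type*} (A : EffectAlgebra E) {a b c x : E}
    (hb : A.oplus a b = some x) (hc : A.oplus a c = some x) : b = c := by
  obtain ⟨x', hx⟩ := A.compl_exists x
  rw [A.comm] at hb hc
  obtain ⟨y, hy, hby⟩ := A.assoc _ _ _ _ _ hb hx
  obtain ⟨z, hz, hcz⟩ := A.assoc _ _ _ _ _ hc hx
  have hyz : y = z := Option.some.inj (hy.symm.trans hz)
  subst hyz
  rw [A.comm] at hby hcz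
  exact A.compl_unique _ _ _ hby hcz

/-- If `(a ⊕ e) ⊕ d = a ⊕ b` then `e ⊕ d = b`. -/
theorem EffectAlgebra.split_aux {E : Type*} (A : EffectAlgebra E) {a b e d j w : E}
    (hj : A.oplus a e = some j) (hw : A.oplus j d = some w)
    (hab : A.oplus a b = some w) : A.oplus e d = some b := by
  obtain ⟨t, ht, hat⟩ := A.assoc _ _ _ _ _ hj hw
  rw [ht, A.cancel_left_aux hat hab]

/-- Every lattice ordered effect algebra is homogeneous. -/
theorem lattice_ordered_homogeneous {E : Type*} (A : EffectAlgebra E)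
    (hinf : ∀ a b : E, ∃ m, A.le m a ∧ A.le m b ∧ ∀ x, A.le x a → A.le x b → A.le x m)
    (hsup : ∀ a b : E, ∃ j, A.le a j ∧ A.le b j ∧ ∀ x, A.le a x → A.le b x → A.le j x) :
    A.Homogeneous := by
  intro u v₁ v₂ s hs hus hus'
  have hc : A.oplus s (A.compl s) = some A.one :=
    Classical.epsilon_spec (A.compl_exists s)
  -- `u ⊥ v₁`
  obtain ⟨k, hk⟩ := hus'
  rw [A.comm] at hk hc
  obtain ⟨p, hp, -⟩ := A.assoc _ _ _ _ _ hk hc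
  rw [A.comm] at hp
  have hs' := hs
  rw [A.comm] at hs'
  obtain ⟨w, hw, -⟩ := A.assoc _ _ _ _ _ hs' hp
  have hw' := hw
  rw [A.comm] at hw'
  obtain ⟨j, ⟨e, he⟩, ⟨f, hf⟩, hj⟩ := hsup u v₁
  obtain ⟨d, hd⟩ := hj w ⟨_, hw'⟩ ⟨_, hw⟩
  obtain ⟨g, hg⟩ := hj s hus ⟨_, hs⟩
  have h1 := A.split_aux he hd hw'
  have h2 := A.split_aux hf hd hw
  have h3 := A.split_aux hf hg hs
  rw [A.comm] at h1 h2
  exact ⟨d, f, ⟨_, h1⟩, ⟨_, h3⟩, h2⟩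
end

section
/- Let E be a homogeneous effect algebra, let M ⊆ E be a finite compatible set, and let a, b ∈ M with b ≤ a. Let C = (c₁, …, c_k) be an orthogonal cover of M and let A, B ⊆ {1,…,k} be such that a = ⊕_{i∈A} cᵢ and b = ⊕_{i∈B} cᵢ. Then there exist a refinement W = (w₁, …, wₙ) of C and sets B_W ⊆ A_W ⊆ {1,…,n} such that (wᵢ)_{i∈A_W} is a refinement of (cᵢ)_{i∈A}, (wᵢ)_{i∈B_W} is a refinement of (cᵢ)_{i∈B}, and the range of W is contained in the closure of the range of C. -/
namespace EffectAlgebra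

variable {E : Type*}

/-- Partial sums: `Option E` with `none` meaning undefined. -/
def PS (_A : EffectAlgebra E) : Type _ := Option E

/-- Embedding of elements in the partial sums. -/
def up (A : EffectAlgebra E) (x : E) : PS A := (some x : Option E)

/-- The undefined partial sum. -/
def bad (A : EffectAlgebra E) : PS A := (none : Option E)

/-- Addition of partial sums. -/
def padd (A : EffectAlgebra E) (x y : PS A) : PS A :=
  Option.bind x fun a => Option.bind y fun b => A.oplus a b

theorem oplus_zero (A : EffectAlgebra E) (a : E) : A.oplus a A.zero = some a := by
  have h1 : A.oplus A.one A.zero = some A.one := by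
    obtain ⟨b, hb⟩ := A.compl_exists A.one
    have := A.add_one b A.one (by rw [A.comm]; exact hb)
    rw [this] at hb; exact hb
  obtain ⟨b, hb⟩ := A.compl_exists a
  have hb' : A.oplus b a = some A.one := by rw [A.comm]; exact hb
  obtain ⟨c, hc, hc'⟩ := A.assoc b a A.zero A.one A.one hb' h1
  rw [hc, A.compl_unique b c a hc' hb']

theorem padd_comm (A : EffectAlgebra E) (x y : PS A) : padd A x y = padd A y x := by
  rcases x with _ | x <;> rcases y with _ | y
  · rfl
  · rfl
  · rfl
  · exact A.comm x y

theorem padd_none (A : EffectAlgebra E) (x : PS A) : padd A x (none : Option E) = (none : Option E) := by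
  rcases x with _ | x <;> rfl

theorem none_padd (A : EffectAlgebra E) (x : PS A) : padd A (none : Option E) x = (none : Option E) := rfl

theorem padd_assoc_aux (A : EffectAlgebra E) (x y z : PS A) (s : E)
    (h : padd A (padd A x y) z = up A s) : padd A x (padd A y z) = up A s := by
  rcases x with _ | x
  · exact h
  rcases z with _ | z
  · rw [padd_none] at h; exact absurd h (fun e => Option.some_ne_none _ e.symm)
  rcases y with _ | y
  · exact h
  change padd A (A.oplus x y : Option E) (some z : Option E) = up A s at h
  change padd A (some x : Option E) (A.oplus y z : Option E) = up A s
  rcases hxy : A.oplus x y with _ | w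
  · rw [hxy] at h; exact absurd h (fun e => Option.some_ne_none _ e.symm)
  · rw [hxy] at h
    obtain ⟨bc, h1, h2⟩ := A.assoc x y z w s hxy h
    rw [h1]; exact h2

theorem padd_assoc (A : EffectAlgebra E) (x y z : PS A) :
    padd A (padd A x y) z = padd A x (padd A y z) := by
  rcases h : padd A (padd A x y) z with _ | s
  · rcases h' : padd A x (padd A y z) with _ | s
    · rfl
    · have h2 : padd A (padd A z y) x = up A s := by
        rw [padd_comm A (padd A z y), padd_comm A z y]; exact h'
      have h3 := padd_assoc_aux A z y x s h2
      rw [padd_comm A z, padd_comm A y x, h] at h3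
      exact h3
  · exact (padd_assoc_aux A x y z s h).symm

theorem padd_zero (A : EffectAlgebra E) (x : PS A) : padd A x (up A A.zero) = x := by
  rcases x with _ | x
  · rfl
  · exact oplus_zero A x

instance instPS (A : EffectAlgebra E) : AddCommMonoid (PS A) where
  add := padd A
  zero := up A A.zero
  add_assoc := padd_assoc A
  add_comm := padd_comm A
  zero_add := fun x => (padd_comm A _ _).trans (padd_zero A x)
  add_zero := padd_zero A
  nsmul := @nsmulRec (PS A) ⟨up A A.zero⟩ ⟨padd A⟩

theorem up_zero (A : EffectAlgebra E) : up A A.zero = 0 := rfl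

theorem up_add (A : EffectAlgebra E) (x y : E) : up A x + up A y = (A.oplus x y : Option E) := rfl

theorem up_inj (A : EffectAlgebra E) {x y : E} (h : up A x = up A y) : x = y :=
  Option.some.inj h

theorem add_bad (A : EffectAlgebra E) (x : PS A) : x + bad A = bad A := by
  cases x <;> rfl

theorem exists_up (A : EffectAlgebra E) {x : PS A} (h : x ≠ bad A) : ∃ y, x = up A y := by
  rcases x with _ | y
  · exact absurd rfl h
  · exact ⟨y, rfl⟩

theorem up_ne_bad (A : EffectAlgebra E) (x : E) : up A x ≠ bad A := by
  intro h; exact Option.some_ne_none x h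

theorem left_ne (A : EffectAlgebra E) {x y : PS A} (h : x + y ≠ bad A) : x ≠ bad A := by
  rintro rfl; apply h; rw [add_comm, add_bad]

theorem right_ne (A : EffectAlgebra E) {x y : PS A} (h : x + y ≠ bad A) : y ≠ bad A := by
  rintro rfl; apply h; rw [add_bad]

theorem up_cancel (A : EffectAlgebra E) {x y z : PS A} (h : x + y = x + z) (hx : x + y ≠ bad A) :
    y = z := by
  obtain ⟨d, hd⟩ := exists_up A hx
  obtain ⟨d', hd'⟩ := A.compl_exists d
  have h1 : up A d + up A d' = up A A.one := hd'
  have hy : (x + up A d') + y = up A A.one := by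
    rw [← h1, ← hd]; abel
  have hz : (x + up A d') + z = up A A.one := by
    rw [← h1, ← hd, h]; abel
  obtain ⟨p, hp⟩ := exists_up A (left_ne A (hy ▸ up_ne_bad A _))
  obtain ⟨q, rfl⟩ := exists_up A (right_ne A (hy ▸ up_ne_bad A _))
  obtain ⟨r, rfl⟩ := exists_up A (right_ne A (hz ▸ up_ne_bad A _))
  rw [hp] at hy hz
  rw [A.compl_unique p q r hy hz]

theorem eq_zero_of_add (A : EffectAlgebra E) {u z : PS A} (h : u + z = 0) : u = 0 := by
  have h1 : (u + up A A.one) + z = up A A.one := by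
    rw [add_right_comm, h, zero_add]
  obtain ⟨p, hp⟩ := exists_up A (left_ne A (h1 ▸ up_ne_bad A _))
  obtain ⟨q, rfl⟩ := exists_up A (left_ne A (hp ▸ up_ne_bad A _))
  rw [A.add_one q p hp]; rfl

theorem compl_spec (A : EffectAlgebra E) (x : E) : A.oplus x (A.compl x) = some A.one :=
  @Classical.epsilon_spec_aux E ⟨A.zero⟩ (fun b => A.oplus x b = some A.one) (A.compl_exists x)

theorem le_iff (A : EffectAlgebra E) (x y : E) : A.le x y ↔ ∃ z, up A x + z = up A y := by
  constructor
  · rintro ⟨c, hc⟩; exact ⟨up A c, hc⟩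
  · rintro ⟨z, hz⟩
    obtain ⟨c, rfl⟩ := exists_up A (right_ne A (hz ▸ up_ne_bad A _))
    exact ⟨c, hz⟩

theorem le_compl (A : EffectAlgebra E) {x y : E} (h : up A x + up A y ≠ bad A) :
    A.le x (A.compl y) := by
  obtain ⟨s, hs⟩ := exists_up A h
  have h1 : up A s + up A (A.compl s) = up A A.one := compl_spec A s
  have h2 : up A y + up A (A.compl y) = up A A.one := compl_spec A y
  rw [← hs] at h1
  have h3 : up A y + (up A x + up A (A.compl s)) = up A y + up A (A.compl y) := by
    rw [h2, ← h1]; abel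
  exact (le_iff A _ _).2 ⟨_, up_cancel A h3 (by rw [h3, h2]; exact up_ne_bad A _)⟩

/-- Closure under the closure step, in terms of partial sums. -/
def Closed (A : EffectAlgebra E) (X : Set E) : Prop :=
  ∀ y ∈ X, ∀ u v, up A u + up A v = up A y → up A u + up A y ≠ bad A → u ∈ X ∧ v ∈ X

theorem closed_closure (A : EffectAlgebra E) (M : Set E) : Closed A (A.closure M) := by
  intro y hy u v h h'
  obtain ⟨n, hn⟩ := Set.mem_iUnion.1 hy
  have hu : A.le u y := ⟨v, h⟩
  have hu' := le_compl A h'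
  constructor <;> refine Set.mem_iUnion.2 ⟨n + 1, ?_⟩ <;>
    rw [closureSeq, Function.iterate_succ_apply']
  · exact Or.inl ⟨y, hn, hu, hu'⟩
  · exact Or.inr ⟨y, hn, u, hu, hu', h⟩

theorem one_step (A : EffectAlgebra E) (hH : A.Homogeneous) {X : Set E} (hX : Closed A X)
    {K : Type*} [DecidableEq K] (S : Finset K) (c : K → E) (hc : ∀ i ∈ S, c i ∈ X) :
    ∀ u z : PS A, u + z = ∑ i ∈ S, up A (c i) → u + ∑ i ∈ S, up A (c i) ≠ bad A →
    ∃ v r : K → E, (∀ i ∈ S, up A (v i) + up A (r i) = up A (c i)) ∧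
      ∑ i ∈ S, up A (v i) = u ∧ ∀ i ∈ S, v i ∈ X ∧ r i ∈ X := by
  induction S using Finset.induction_on with
  | empty =>
    intro u z h _
    refine ⟨c, c, by simp, ?_, by simp⟩
    simp only [Finset.sum_empty] at h ⊢
    exact (eq_zero_of_add A h).symm
  | insert i S hi ih =>
    intro u z h h'
    rw [Finset.sum_insert hi] at h h'
    obtain ⟨x, hx⟩ := exists_up A (right_ne A (right_ne A h'))
    obtain ⟨s, hs⟩ := exists_up A (right_ne A h')
    obtain ⟨u0, rfl⟩ := exists_up A (left_ne A h')
    rw [hs] at h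
    obtain ⟨u1, u2, h1, h2, h3⟩ := hH u0 (c i) x s (by rw [hx] at hs; exact hs)
      ((le_iff A _ _).2 ⟨z, h⟩) (le_compl A (by rw [← hs]; exact h'))
    have h3' : up A u1 + up A u2 = up A u0 := h3
    obtain ⟨r1, h1⟩ := h1
    have h1' : up A u1 + up A r1 = up A (c i) := h1
    obtain ⟨z2, h2⟩ := (le_iff A _ _).1 h2
    rw [← h3'] at h' ⊢
    obtain ⟨v, r, e1, e2, e3⟩ := ih (fun j hj => hc j (Finset.mem_insert_of_mem hj)) (up A u2) z2
      (by rw [h2, hx]) (left_ne A (y := up A u1 + up A (c i)) (by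
        convert h' using 1; abel))
    have hne : ∀ j ∈ S, j ≠ i := fun j hj e => hi (e ▸ hj)
    refine ⟨Function.update v i u1, Function.update r i r1, ?_, ?_, ?_⟩
    · intro j hj
      rcases Finset.mem_insert.1 hj with rfl | hj
      · simpa using h1'
      · simpa [hne j hj] using e1 j hj
    · rw [Finset.sum_insert hi, ← e2]
      congr 1
      · simp
      · refine Finset.sum_congr rfl fun j hj => ?_
        simp [hne j hj]
    · intro j hj
      rcases Finset.mem_insert.1 hj with rfl | hj
      · simpa using hX (c j) (hc j (Finset.mem_insert_self _ _)) u1 r1 h1'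
          (left_ne A (y := up A u2 + ∑ i ∈ S, up A (c i)) (by convert h' using 1; abel))
      · simpa [hne j hj] using e3 j hj

theorem matrix_step (A : EffectAlgebra E) (hH : A.Homogeneous) {X : Set E} (hX : Closed A X)
    {K L : Type*} [DecidableEq K] [DecidableEq L] (S : Finset K) (T : Finset L) (d : L → E) :
    ∀ (c : K → E) (_ : ∀ i ∈ S, c i ∈ X) (z : PS A),
    (∑ j ∈ T, up A (d j)) + z = ∑ i ∈ S, up A (c i) →
    (∑ j ∈ T, up A (d j)) + ∑ i ∈ S, up A (c i) ≠ bad A →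
    ∃ (w : K → L → E) (r : K → E),
      (∀ i ∈ S, up A (r i) + ∑ j ∈ T, up A (w i j) = up A (c i)) ∧
      (∀ j ∈ T, ∑ i ∈ S, up A (w i j) = up A (d j)) ∧
      (∀ i ∈ S, r i ∈ X) ∧ ∀ i ∈ S, ∀ j ∈ T, w i j ∈ X := by
  induction T using Finset.induction_on with
  | empty =>
    intro c hc z h h'
    exact ⟨fun i _ => c i, c, by simp, by simp, hc, by simp⟩
  | insert j T hj ih =>
    intro c hc z h h'
    rw [Finset.sum_insert hj] at h h'
    obtain ⟨v, r, e1, e2, e3⟩ := one_step A hH hX S c hc (up A (d j))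
      ((∑ j ∈ T, up A (d j)) + z) (by rw [← h]; abel)
      (left_ne A (y := ∑ j ∈ T, up A (d j)) (by convert h' using 1; abel))
    have hs : ∑ i ∈ S, up A (c i) = up A (d j) + ∑ i ∈ S, up A (r i) := by
      rw [← e2, ← Finset.sum_add_distrib]
      exact Finset.sum_congr rfl fun i hi => (e1 i hi).symm
    obtain ⟨w, r', f1, f2, f3, f4⟩ := ih r (fun i hi => (e3 i hi).2) z
      (by
        refine up_cancel A (x := up A (d j)) ?_ ?_
        · rw [← hs, ← h]; abel
        · rw [← add_assoc, h]; exact right_ne A h')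
      (by
        refine left_ne A (y := up A (d j) + up A (d j)) ?_
        rw [hs] at h'
        convert h' using 1; abel)
    have hne : ∀ k ∈ T, k ≠ j := fun k hk e => hj (e ▸ hk)
    refine ⟨fun i k => if k = j then v i else w i k, r', ?_, ?_, f3, ?_⟩
    · intro i hi
      rw [Finset.sum_insert hj, ← e1 i hi, ← f1 i hi]
      have : ∑ k ∈ T, up A (if k = j then v i else w i k) = ∑ k ∈ T, up A (w i k) :=
        Finset.sum_congr rfl fun k hk => by simp [hne k hk]
      rw [this]; simp only [if_true]; abel
    · intro k hk
      rcases Finset.mem_insert.1 hk with rfl | hk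
      · simpa using e2
      · simpa [hne k hk] using f2 k hk
    · intro i hi k hk
      rcases Finset.mem_insert.1 hk with rfl | hk
      · simpa using (e3 i hi).1
      · simpa [hne k hk] using f4 i hi k hk

theorem sumList_eq (A : EffectAlgebra E) (l : List E) :
    (A.sumList l : PS A) = (l.map (up A)).sum := by
  induction l with
  | nil => rfl
  | cons x xs ih =>
    rw [List.map_cons, List.sum_cons, ← ih]
    simp only [sumList]
    rcases A.sumList xs with _ | s <;> rfl

theorem sum_pick (A : EffectAlgebra E) (C : List E) (S : Finset (Fin C.length)) :
    (A.sumList (pickList C S) : PS A) = ∑ i ∈ S, up A (C.get i) := by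
  rw [sumList_eq, pickList, List.map_map]
  conv_rhs => rw [← Finset.sort_toFinset S (· ≤ ·)]
  rw [List.sum_toFinset _ (Finset.sort_nodup _ _)]
  rfl

theorem refinement_of (A : EffectAlgebra E) {ι κ : Type*} [Fintype ι] [DecidableEq κ]
    (D C : List E) (e : Fin D.length ≃ ι) (e' : Fin C.length ≃ κ) (d : ι → E) (c : κ → E)
    (hd : ∀ k, D.get k = d (e k)) (hc : ∀ k, C.get k = c (e' k)) (f : ι → κ)
    (h : ∀ i, ∑ k with f k = i, up A (d k) = up A (c i)) : A.IsRefinement D C := by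
  refine ⟨fun i => Finset.univ.filter fun k => f (e k) = e' i, ?_, ?_, ?_⟩
  · intro i j hij
    rw [Finset.disjoint_left]
    intro k hk hk'
    simp only [Finset.mem_filter, Finset.mem_univ, true_and] at hk hk'
    exact hij (e'.injective (hk.symm.trans hk'))
  · intro k
    exact ⟨e'.symm (f (e k)), by simp⟩
  · intro i
    rw [hc i]
    have key : ∑ k with f (e k) = e' i, up A (D.get k) = ∑ k with f k = e' i, up A (d k) := by
      refine Finset.sum_equiv e ?_ ?_
      · intro k; simp
      · intro k _; rw [hd k]
    exact (sum_pick A D _).trans (key.trans (h (e' i)))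

theorem pick_equiv (C : List E) (S : Finset (Fin C.length)) :
    ∃ e : Fin (pickList C S).length ≃ {x // x ∈ S},
      ∀ k, (pickList C S).get k = C.get (e k).1 := by
  have hl : (pickList C S).length = S.card := by simp [pickList]
  refine ⟨(finCongr hl).trans (S.orderIsoOfFin rfl).toEquiv, ?_⟩
  intro k
  refine (List.getElem_map C.get (l := S.sort (· ≤ ·)) (h := k.2)).trans ?_
  rfl

theorem refinement_pick (A : EffectAlgebra E) {ι : Type*} [Fintype ι] [DecidableEq ι]
    (W C : List E) (e : Fin W.length ≃ ι) (w : ι → E) (hw : ∀ k, W.get k = w (e k))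
    (T : Finset ι) (S : Finset (Fin C.length)) (f : ι → Fin C.length) (hf : ∀ p ∈ T, f p ∈ S)
    (h : ∀ i ∈ S, ∑ p ∈ T with f p = i, up A (w p) = up A (C.get i)) :
    A.IsRefinement (pickList W (Finset.univ.filter fun k => e k ∈ T)) (pickList C S) := by
  obtain ⟨e1, h1⟩ := pick_equiv W (Finset.univ.filter fun k => e k ∈ T)
  obtain ⟨e2, h2⟩ := pick_equiv C S
  refine refinement_of A _ _ e1 e2 (fun x => W.get x.1) (fun x => C.get x.1) h1 h2
    (fun x => ⟨f (e x.1), hf _ (Finset.mem_filter.1 x.2).2⟩) ?_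
  rintro ⟨i, hi⟩
  rw [← h i hi]
  refine Finset.sum_bij (fun x _ => e x.1) ?_ ?_ ?_ ?_
  · rintro ⟨x, hx⟩ hx'
    simp only [Finset.mem_filter, Finset.mem_univ, true_and, Subtype.mk.injEq] at hx hx' ⊢
    exact ⟨hx, hx'⟩
  · rintro ⟨x, hx⟩ _ ⟨y, hy⟩ _ hxy
    exact Subtype.ext (e.injective hxy)
  · intro p hp
    simp only [Finset.mem_filter] at hp
    exact ⟨⟨e.symm p, by simp [hp.1]⟩, by simp [hp.2], by simp⟩
  · intro x _
    exact congrArg _ (hw x.1)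

end EffectAlgebra

/-- refinement of an orthogonal cover compatible with `b ≤ a`,
with range contained in the closure of the range of the original cover. -/
theorem cover_refinement {E : Type*} (A : EffectAlgebra E)
    (hH : A.Homogeneous) (M : Finset E) (hM : A.Compatible ↑M)
    (a b : E) (ha : a ∈ M) (hb : b ∈ M) (hba : A.le b a)
    (C : List E) (hC : A.IsCoverOf C ↑M)
    (SA SB : Finset (Fin C.length))
    (hSA : A.sumList (EffectAlgebra.pickList C SA) = some a)
    (hSB : A.sumList (EffectAlgebra.pickList C SB) = some b) :
    ∃ (W : List E) (AW BW : Finset (Fin W.length)),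
      A.IsRefinement W C ∧ BW ⊆ AW ∧
      A.IsRefinement (EffectAlgebra.pickList W AW) (EffectAlgebra.pickList C SA) ∧
      A.IsRefinement (EffectAlgebra.pickList W BW) (EffectAlgebra.pickList C SB) ∧
      ∀ w ∈ W, w ∈ A.closure {c | c ∈ C} := by
  classical
  set X := A.closure {c | c ∈ C} with hXdef
  have hX : EffectAlgebra.Closed A X := EffectAlgebra.closed_closure A _
  let c : Fin C.length → E := C.get
  have hcX : ∀ i, c i ∈ X := fun i => Set.mem_iUnion.2 ⟨0, List.get_mem C i⟩
  have hzX : ∀ _ : Fin C.length, A.zero ∈ X := fun i =>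
    (hX (c i) (hcX i) A.zero (c i) (by rw [EffectAlgebra.up_zero, zero_add])
      (by rw [EffectAlgebra.up_zero, zero_add]; exact EffectAlgebra.up_ne_bad A _)).1
  have hA : ∑ i ∈ SA, EffectAlgebra.up A (c i) = EffectAlgebra.up A a :=
    (EffectAlgebra.sum_pick A C SA).symm.trans hSA
  have hB : ∑ i ∈ SB, EffectAlgebra.up A (c i) = EffectAlgebra.up A b :=
    (EffectAlgebra.sum_pick A C SB).symm.trans hSB
  have hT : ∑ i, EffectAlgebra.up A (c i) ≠ EffectAlgebra.bad A := by
    have h1 : (A.sumList C : EffectAlgebra.PS A) = ∑ i, EffectAlgebra.up A (c i) := by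
      rw [EffectAlgebra.sumList_eq, ← List.sum_ofFn]
      congr 1
      conv_lhs => rw [← List.ofFn_get C]
      rw [List.map_ofFn]; rfl
    rw [← h1]
    intro h2
    have h3 := hC.1
    have h4 : A.sumList C = none := h2
    rw [h4] at h3
    simp at h3
  obtain ⟨z, hz⟩ := (EffectAlgebra.le_iff A b a).1 hba
  have hA' : (∑ i ∈ SA \ SB, EffectAlgebra.up A (c i)) +
      ∑ i ∈ SA ∩ SB, EffectAlgebra.up A (c i) = EffectAlgebra.up A a := by
    rw [← Finset.sum_union (Finset.disjoint_sdiff_inter _ _), Finset.sdiff_union_inter, hA]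
  have hB' : (∑ i ∈ SB \ SA, EffectAlgebra.up A (c i)) +
      ∑ i ∈ SA ∩ SB, EffectAlgebra.up A (c i) = EffectAlgebra.up A b := by
    rw [Finset.inter_comm, ← Finset.sum_union (Finset.disjoint_sdiff_inter _ _),
      Finset.sdiff_union_inter, hB]
  have hle : (∑ i ∈ SB \ SA, EffectAlgebra.up A (c i)) + z =
      ∑ i ∈ SA \ SB, EffectAlgebra.up A (c i) := by
    have h1 : (∑ i ∈ SA ∩ SB, EffectAlgebra.up A (c i)) +
        ((∑ i ∈ SB \ SA, EffectAlgebra.up A (c i)) + z) = EffectAlgebra.up A a := by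
      rw [← hz, ← hB']; abel
    refine EffectAlgebra.up_cancel A (x := ∑ i ∈ SA ∩ SB, EffectAlgebra.up A (c i)) ?_ ?_
    · rw [h1, ← hA', add_comm]
    · rw [h1]; exact EffectAlgebra.up_ne_bad A _
  have hdj : Disjoint (SB \ SA) (SA \ SB) := by
    rw [Finset.disjoint_left]; intro i hi hi'
    exact (Finset.mem_sdiff.1 hi).2 (Finset.mem_sdiff.1 hi').1
  have hperp : (∑ i ∈ SB \ SA, EffectAlgebra.up A (c i)) +
      ∑ i ∈ SA \ SB, EffectAlgebra.up A (c i) ≠ EffectAlgebra.bad A := by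
    rw [← Finset.sum_union hdj]
    rw [← Finset.sum_add_sum_compl ((SB \ SA) ∪ (SA \ SB))] at hT
    exact EffectAlgebra.left_ne A hT
  obtain ⟨w, r, f1, f2, f3, f4⟩ := EffectAlgebra.matrix_step A hH hX (SA \ SB) (SB \ SA) c c
    (fun i _ => hcX i) z hle hperp
  let wf : Fin C.length × Option (Fin C.length) → E := fun p =>
    match p.2 with
    | none => if p.1 ∈ SA \ SB then r p.1 else c p.1
    | some j => if p.1 ∈ SA \ SB ∧ j ∈ SB \ SA then w p.1 j else A.zero
  have hwX : ∀ p, wf p ∈ X := by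
    rintro ⟨i, _ | j⟩
    · by_cases hi : i ∈ SA \ SB
      · simp only [wf, if_pos hi]; exact f3 i hi
      · simp only [wf, if_neg hi]; exact hcX i
    · by_cases hi : i ∈ SA \ SB ∧ j ∈ SB \ SA
      · simp only [wf, if_pos hi]; exact f4 i hi.1 j hi.2
      · simp only [wf, if_neg hi]; exact hzX i
  have hrow : ∀ i, ∑ o, EffectAlgebra.up A (wf (i, o)) = EffectAlgebra.up A (c i) := by
    intro i
    rw [Fintype.sum_option]
    by_cases hi : i ∈ SA \ SB
    · rw [← f1 i hi]
      congr 1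
      · simp only [wf, if_pos hi]
      · rw [← Finset.sum_subset (Finset.subset_univ (SB \ SA))]
        · refine Finset.sum_congr rfl fun j hj => ?_
          simp only [wf, if_pos (And.intro hi hj)]
        · intro j _ hj
          have : ¬ (i ∈ SA \ SB ∧ j ∈ SB \ SA) := fun h => hj h.2
          simp only [wf, if_neg this]
          rfl
    · have : ∀ j, EffectAlgebra.up A (wf (i, some j)) = 0 := by
        intro j
        have : ¬ (i ∈ SA \ SB ∧ j ∈ SB \ SA) := fun h => hi h.1
        simp only [wf, if_neg this]
        rfl
      simp only [this, Finset.sum_const_zero, add_zero]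
      simp only [wf, if_neg hi]
  have hrow' : ∀ i, ∑ p ∈ ({i} : Finset (Fin C.length)) ×ˢ
      (Finset.univ : Finset (Option (Fin C.length))), EffectAlgebra.up A (wf p) =
      EffectAlgebra.up A (c i) := by
    intro i
    rw [Finset.sum_product, Finset.sum_singleton, hrow]
  obtain ⟨W, eW, hW⟩ : ∃ (W : List E)
      (e : Fin W.length ≃ Fin C.length × Option (Fin C.length)), ∀ k, W.get k = wf (e k) := by
    refine ⟨List.ofFn (wf ∘ (Fintype.equivFin _).symm),
      (finCongr (List.length_ofFn)).trans (Fintype.equivFin _).symm, ?_⟩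
    intro k
    simp
    rfl
  let TA : Finset (Fin C.length × Option (Fin C.length)) := Finset.univ.filter fun p => p.1 ∈ SA
  let TB : Finset (Fin C.length × Option (Fin C.length)) := Finset.univ.filter fun p =>
    p.1 ∈ SA ∧ (p.1 ∈ SB ∨ ∃ j ∈ SB \ SA, p.2 = some j)
  refine ⟨W, Finset.univ.filter (fun k => eW k ∈ TA), Finset.univ.filter (fun k => eW k ∈ TB),
    ?_, ?_, ?_, ?_, ?_⟩
  · refine EffectAlgebra.refinement_of A W C eW (Equiv.refl _) wf c hW (fun _ => rfl) Prod.fst ?_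
    intro i
    rw [← hrow' i]
    refine Finset.sum_congr ?_ fun _ _ => rfl
    ext ⟨x, y⟩
    simp [eq_comm]
  · intro k hk
    simp only [TA, TB, Finset.mem_filter, Finset.mem_univ, true_and] at hk ⊢
    exact hk.1
  · refine EffectAlgebra.refinement_pick A W C eW wf hW TA SA Prod.fst ?_ ?_
    · intro p hp
      exact (Finset.mem_filter.1 hp).2
    · intro i hi
      refine Eq.trans ?_ (hrow' i)
      refine Finset.sum_congr ?_ fun _ _ => rfl
      ext ⟨x, y⟩
      simp only [TA, Finset.mem_filter, Finset.mem_univ, true_and, Finset.mem_product,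
        Finset.mem_singleton, and_true]
      exact ⟨fun h => h.2, fun h => ⟨h ▸ hi, h⟩⟩
  · refine EffectAlgebra.refinement_pick A W C eW wf hW TB SB
      (fun p => if p.1 ∈ SB then p.1 else p.2.getD p.1) ?_ ?_
    · rintro ⟨i, o⟩ hp
      obtain ⟨-, h1, h2⟩ := Finset.mem_filter.1 hp
      by_cases hi : i ∈ SB
      · simp [hi]
      · rcases h2 with h2 | ⟨j, hj, h2⟩
        · exact absurd h2 hi
        · simp only at h2
          subst h2
          simpa [hi] using (Finset.mem_sdiff.1 hj).1
    · intro i hi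
      by_cases hiA : i ∈ SA
      · refine Eq.trans ?_ (hrow' i)
        refine Finset.sum_congr ?_ fun _ _ => rfl
        ext ⟨x, y⟩
        simp only [TB, Finset.mem_filter, Finset.mem_univ, true_and, Finset.mem_product,
          Finset.mem_singleton, and_true]
        constructor
        · rintro ⟨⟨h1, h2⟩, h3⟩
          by_cases hx : x ∈ SB
          · simpa [hx] using h3
          · rcases h2 with h2 | ⟨j, hj, rfl⟩
            · exact absurd h2 hx
            · simp only [hx, if_false, Option.getD_some] at h3
              subst h3
              exact absurd hiA (Finset.mem_sdiff.1 hj).2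
        · rintro rfl
          exact ⟨⟨hiA, Or.inl hi⟩, by simp [hi]⟩
      · have hi' : i ∈ SB \ SA := Finset.mem_sdiff.2 ⟨hi, hiA⟩
        refine Eq.trans ?_ (f2 i hi')
        have : ∑ x ∈ SA \ SB, EffectAlgebra.up A (w x i) =
            ∑ p ∈ (SA \ SB) ×ˢ ({some i} : Finset (Option (Fin C.length))),
              EffectAlgebra.up A (wf p) := by
          rw [Finset.sum_product]
          refine Finset.sum_congr rfl fun x hx => ?_
          rw [Finset.sum_singleton]
          simp only [wf, if_pos (And.intro hx hi')]
        rw [this]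
        refine Finset.sum_congr ?_ fun _ _ => rfl
        ext ⟨x, y⟩
        simp only [TB, Finset.mem_filter, Finset.mem_univ, true_and, Finset.mem_product,
          Finset.mem_singleton]
        constructor
        · rintro ⟨⟨h1, h2⟩, h3⟩
          by_cases hx : x ∈ SB
          · simp only [hx, if_true] at h3
            exact absurd (h3 ▸ h1) hiA
          · rcases h2 with h2 | ⟨j, hj, rfl⟩
            · exact absurd h2 hx
            · simp only [hx, if_false, Option.getD_some] at h3
              exact ⟨Finset.mem_sdiff.2 ⟨h1, hx⟩, by rw [h3]⟩
        · rintro ⟨h1, rfl⟩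
          obtain ⟨h1, h2⟩ := Finset.mem_sdiff.1 h1
          exact ⟨⟨h1, Or.inr ⟨i, hi', rfl⟩⟩, by simp [h2]⟩
  · intro x hx
    obtain ⟨k, rfl⟩ := List.get_of_mem hx
    rw [hW]
    exact hwX _
end

section
/- For an effect algebra E, the following are equivalent: (a) E satisfies the Riesz decomposition property; (b) E is homogeneous and E is a compatible subset of itself (i.e. every finite subset of E has an orthogonal cover). -/
namespace EffectAlgebra

variable {E : Type*}

/-- Total extension of the partial sum: `none` is absorbing. -/
def Ext (_A : EffectAlgebra E) : Type _ := Option E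

namespace Ext

variable {A : EffectAlgebra E}

/-- The undefined element. -/
def bot : A.Ext := (none : Option E)

/-- Embedding of `E`. -/
def of (A : EffectAlgebra E) (a : E) : A.Ext := (some a : Option E)

/-- Identity map into the extension. -/
def mk (A : EffectAlgebra E) (x : Option E) : A.Ext := x

/-- Extended sum. -/
def add (x y : A.Ext) : A.Ext :=
  Option.bind (x : Option E) fun a => Option.bind (y : Option E) fun b => A.oplus a b

theorem cases_bot (x : A.Ext) : x = bot ∨ ∃ a, x = of A a := by
  rcases x with _ | a
  · exact Or.inl rfl
  · exact Or.inr ⟨a, rfl⟩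

theorem of_inj {a b : E} (h : of A a = of A b) : a = b := Option.some.inj h

theorem of_ne (a : E) : of A a ≠ bot := fun h => Option.some_ne_none a h

theorem exists_of {x : A.Ext} (h : x ≠ bot) : ∃ a, x = of A a :=
  (cases_bot x).resolve_left h

theorem add_of (a b : E) : add (of A a) (of A b) = A.oplus a b := rfl

theorem add_of_iff (a b c : E) : add (of A a) (of A b) = of A c ↔ A.oplus a b = some c :=
  Iff.rfl

theorem bot_add' (x : A.Ext) : add bot x = bot := rfl

theorem add_comm' (x y : A.Ext) : add x y = add y x := by
  rcases x with _ | a <;> rcases y with _ | b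
  · rfl
  · rfl
  · rfl
  · exact A.comm a b

theorem add_bot' (x : A.Ext) : add x bot = bot := by rw [add_comm']; rfl

theorem assoc_half (x y z : A.Ext) (h : add (add x y) z ≠ bot) :
    add (add x y) z = add x (add y z) := by
  obtain ⟨t, ht⟩ := exists_of h
  rcases cases_bot x with rfl | ⟨a, rfl⟩
  · exact absurd (by simp [bot_add']) h
  rcases cases_bot y with rfl | ⟨b, rfl⟩
  · exact absurd (by simp [bot_add', add_bot']) h
  rcases cases_bot z with rfl | ⟨c, rfl⟩
  · exact absurd (by simp [add_bot']) h
  rcases cases_bot (add (of A a) (of A b)) with h1 | ⟨d, h1⟩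
  · exact absurd (by rw [h1, bot_add']) h
  rw [h1] at ht ⊢
  obtain ⟨e, he, he2⟩ := A.assoc a b c d t h1 ht
  have he' : add (of A b) (of A c) = of A e := he
  rw [he', ht]
  exact he2.symm

theorem add_assoc' (x y z : A.Ext) : add (add x y) z = add x (add y z) := by
  by_cases h : add (add x y) z = bot
  · by_cases h2 : add x (add y z) = bot
    · rw [h, h2]
    · have h3 : add (add z y) x ≠ bot := by
        rwa [add_comm' _ x, add_comm' z y]
      have := assoc_half z y x h3
      rw [add_comm' _ x, add_comm' z y, add_comm' z, add_comm' y x] at this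
      exact this.symm
  · exact assoc_half x y z h

theorem compl_uniq {x y z : A.Ext} (h1 : add x y = of A A.one) (h2 : add x z = of A A.one) :
    y = z := by
  rcases cases_bot x with rfl | ⟨a, rfl⟩
  · exact absurd h1.symm (of_ne _)
  rcases cases_bot y with rfl | ⟨b, rfl⟩
  · rw [add_bot'] at h1; exact absurd h1.symm (of_ne _)
  rcases cases_bot z with rfl | ⟨c, rfl⟩
  · rw [add_bot'] at h2; exact absurd h2.symm (of_ne _)
  rw [A.compl_unique a b c h1 h2]

theorem zero_add' (x : A.Ext) : add (of A A.zero) x = x := by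
  rcases cases_bot x with rfl | ⟨a, rfl⟩
  · exact add_bot' _
  have h0 : add (of A A.zero) (of A A.one) = of A A.one := by
    obtain ⟨b, hb⟩ := A.compl_exists A.one
    have hb' := hb
    rw [A.comm] at hb'
    rw [A.add_one b _ hb'] at hb'
    exact hb'
  obtain ⟨b, hb⟩ := A.compl_exists a
  have hb1 : add (of A a) (of A b) = of A A.one := hb
  have h1 : add (of A b) (of A a) = of A A.one := by rw [add_comm']; exact hb
  refine compl_uniq (x := of A b) ?_ h1
  rw [add_comm', add_assoc', hb1, h0]

instance : Zero A.Ext := ⟨of A A.zero⟩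

instance : Add A.Ext := ⟨add⟩

instance : AddCommMonoid A.Ext where
  add_assoc := add_assoc'
  zero_add := zero_add'
  add_zero x := (add_comm' _ _).trans (zero_add' x)
  add_comm := add_comm'
  nsmul := nsmulRec

theorem zero_def : (0 : A.Ext) = of A A.zero := rfl

theorem oplus_iff (a b c : E) : of A a + of A b = of A c ↔ A.oplus a b = some c := Iff.rfl

theorem bot_add (x : A.Ext) : bot + x = bot := bot_add' x

theorem ne_left {x y : A.Ext} (h : x + y ≠ bot) : x ≠ bot := by
  rintro rfl; exact h (bot_add y)

theorem ne_of_eq {x y z : A.Ext} (h : x ≠ bot) (e : x = y + z) : y ≠ bot := by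
  subst e; exact ne_left h

theorem exists_compl {x : A.Ext} (h : x ≠ bot) : ∃ y, x + y = of A A.one := by
  obtain ⟨a, rfl⟩ := exists_of h
  obtain ⟨b, hb⟩ := A.compl_exists a
  exact ⟨of A b, hb⟩

theorem cancel {x y z : A.Ext} (h : x + y ≠ bot) (e : x + y = x + z) : y = z := by
  obtain ⟨w, hw⟩ := exists_compl h
  refine compl_uniq (x := x + w) ?_ ?_
  · change x + w + y = _
    rw [← hw]; abel
  · change x + w + z = _
    rw [← hw, e]; abel

theorem le_iff (a b : E) : A.le a b ↔ ∃ c : A.Ext, of A a + c = of A b := by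
  constructor
  · rintro ⟨c, hc⟩; exact ⟨of A c, hc⟩
  · rintro ⟨c, hc⟩
    have : c ≠ bot := by
      rintro rfl; rw [add_comm, bot_add] at hc; exact of_ne _ hc.symm
    obtain ⟨c, rfl⟩ := exists_of this
    exact ⟨c, hc⟩

theorem compl_spec (a : E) : of A a + of A (A.compl a) = of A A.one :=
  Classical.epsilon_spec (p := fun b => A.oplus a b = some A.one) (A.compl_exists a)

theorem le_compl_iff (a b : E) : A.le a (A.compl b) ↔ of A a + of A b ≠ bot := by
  rw [le_iff]
  constructor
  · rintro ⟨c, hc⟩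
    have := compl_spec (A := A) b
    rw [← hc] at this
    refine ne_of_eq (x := of A A.one) (z := c) (of_ne _) ?_
    rw [← this]; abel
  · intro h
    obtain ⟨w, hw⟩ := exists_compl h
    refine ⟨w, compl_uniq (x := of A b) ?_ (compl_spec b)⟩
    change of A b + (of A a + w) = _
    rw [← hw]; abel

/-- The conclusion of Riesz decomposition in the extension. -/
def Splits (u v w : A.Ext) : Prop :=
  ∃ u₁ u₂ c₁ c₂, u₁ + u₂ = u ∧ u₁ + c₁ = v ∧ u₂ + c₂ = w

theorem splits_iff (u v w : E) : Splits (of A u) (of A v) (of A w) ↔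
    ∃ u₁ u₂, A.le u₁ v ∧ A.le u₂ w ∧ A.oplus u₁ u₂ = some u := by
  constructor
  · rintro ⟨u₁, u₂, c₁, c₂, h, h1, h2⟩
    obtain ⟨a, rfl⟩ := exists_of (ne_of_eq (of_ne _) h1.symm)
    obtain ⟨b, rfl⟩ := exists_of (ne_of_eq (of_ne _) h2.symm)
    exact ⟨a, b, (le_iff _ _).2 ⟨_, h1⟩, (le_iff _ _).2 ⟨_, h2⟩, h⟩
  · rintro ⟨a, b, h1, h2, h⟩
    obtain ⟨c, hc⟩ := (le_iff _ _).1 h1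
    obtain ⟨d, hd⟩ := (le_iff _ _).1 h2
    exact ⟨_, _, c, d, h, hc, hd⟩

theorem rdp_iff : A.RDP ↔ ∀ u v w k : A.Ext, v + w ≠ bot → u + k = v + w → Splits u v w := by
  constructor
  · intro h u v w k hd hk
    obtain ⟨s, hs⟩ := exists_of hd
    obtain ⟨v, rfl⟩ := exists_of (ne_left hd)
    obtain ⟨w, rfl⟩ := exists_of (ne_left (add_comm _ w ▸ hd))
    obtain ⟨u, rfl⟩ := exists_of (ne_of_eq hd hk.symm)
    exact (splits_iff _ _ _).2 (h u v w s hs ((le_iff _ _).2 ⟨k, hk.trans hs⟩))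
  · intro h u v w s hs hu
    obtain ⟨k, hk⟩ := (le_iff _ _).1 hu
    have hs' : of A v + of A w = of A s := hs
    exact (splits_iff _ _ _).1 (h _ _ _ k (hs' ▸ of_ne _) (hk.trans hs'.symm))

theorem hom_use (h : A.Homogeneous) (u v w k : A.Ext) (hd : u + (v + w) ≠ bot)
    (hk : u + k = v + w) : Splits u v w := by
  have hvw : v + w ≠ bot := ne_left (add_comm u _ ▸ hd)
  obtain ⟨s, hs⟩ := exists_of hvw
  obtain ⟨v, rfl⟩ := exists_of (ne_left hvw)
  obtain ⟨w, rfl⟩ := exists_of (ne_left (add_comm _ w ▸ hvw))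
  obtain ⟨u, rfl⟩ := exists_of (ne_left hd)
  exact (splits_iff _ _ _).2 (h u v w s hs ((le_iff _ _).2 ⟨k, hk.trans hs⟩)
    ((le_compl_iff _ _).2 (hs ▸ hd)))

theorem core (hom : A.Homogeneous) (a b c d e g h v k : A.Ext)
    (T : a + b + c + d + e + g + h ≠ bot)
    (hs : a + b + e + g = (a + b + c + d) + v)
    (hu : (a + c + e + h) + k = a + b + e + g) :
    Splits (a + c + e + h) (a + b + c + d) v := by
  have hsd : a + b + e + g ≠ bot := ne_of_eq (z := c + d + h) T (by abel)
  have e1 : e + g = c + (d + v) := by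
    refine cancel (x := a + b) ?_ ?_
    · rw [← add_assoc]; exact hsd
    · rw [← add_assoc, hs]; abel
  obtain ⟨x1, x2, y1, y2, rfl, rfl, rfl⟩ := hom_use hom c e g (d + v)
    (ne_of_eq (z := a + b + d + h) T (by abel)) e1.symm
  have e2 : d + v = y1 + y2 := by
    refine cancel (x := x1 + x2) ?_ ?_
    · rw [← e1]; exact ne_of_eq (z := a + b) hsd (by abel)
    · rw [← e1]; abel
  obtain ⟨z1, z2, t1, t2, rfl, rfl, rfl⟩ := hom_use hom d y1 y2 v
    (ne_of_eq (z := a + b + x1 + x2 + x1 + x2 + h) T (by abel)) e2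
  have e3 : v = t1 + t2 := by
    refine cancel (x := z1 + z2) ?_ ?_
    · rw [e2]; exact ne_of_eq (z := a + b + x1 + x2) hsd (by abel)
    · rw [e2]; abel
  subst e3
  have e4 : (x1 + z1 + h) + k = (b + z1 + z2) + t2 := by
    refine cancel (x := a + x1 + x2 + t1) ?_ ?_
    · refine ne_of_eq (z := 0) hsd ?_
      rw [← hu]; abel
    · refine Eq.trans (b := (a + (x1 + x2) + (x1 + (z1 + t1)) + h) + k) (by abel) ?_
      rw [hu]; abel
  obtain ⟨r1, r2, p1, p2, hr, hp1, hp2⟩ := hom_use hom (x1 + z1 + h) (b + z1 + z2) t2 k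
    (ne_of_eq (z := a + x1 + x2 + x2 + z2 + t1) T (by abel)) e4
  refine ⟨a + x1 + x2 + r1, t1 + r2, p1, p2, ?_, ?_, ?_⟩
  · refine Eq.trans (b := a + x1 + x2 + t1 + (r1 + r2)) (by abel) ?_
    rw [hr]; abel
  · refine Eq.trans (b := a + x1 + x2 + (r1 + p1)) (by abel) ?_
    rw [hp1]; abel
  · rw [add_assoc, hp2]

theorem sumList_eq (C : List E) : mk A (A.sumList C) = (C.map (of A)).sum := by
  induction C with
  | nil => rfl
  | cons x xs ih =>
    rw [List.map_cons, List.sum_cons, ← ih]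
    rfl

theorem pick_eq (C : List E) (S : Finset (Fin C.length)) :
    mk A (A.sumList (pickList C S)) = ∑ i ∈ S, of A (C.get i) := by
  refine (sumList_eq _).trans ?_
  rw [pickList, List.map_map]
  have := Finset.sum_map_toList S (fun i => of A (C.get i))
  rw [← this]
  refine List.Perm.sum_eq ?_
  exact (List.Perm.map _ (Finset.sort_perm_toList S _))

theorem total_eq (C : List E) :
    mk A (A.sumList C) = ∑ i : Fin C.length, of A (C.get i) := by
  refine (sumList_eq C).trans ?_
  rw [← List.sum_ofFn]
  congr 1
  conv_lhs => rw [← List.ofFn_get C, List.map_ofFn]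
  rfl

open Classical in
theorem backward (hom : A.Homogeneous) (hc : A.Compatible Set.univ) : A.RDP := by
  intro u v w s hs hu
  obtain ⟨k, hk⟩ := (le_iff _ _).1 hu
  obtain ⟨C, -, hC1, hC2⟩ := hc {u, v, s} (Set.subset_univ _)
  have hs' : of A v + of A w = of A s := hs
  obtain ⟨U, hU⟩ := hC2 u (by simp)
  obtain ⟨V, hV⟩ := hC2 v (by simp)
  obtain ⟨S, hS⟩ := hC2 s (by simp)
  replace hU : ∑ i ∈ U, of A (C.get i) = of A u := by rw [← pick_eq]; exact hU
  replace hV : ∑ i ∈ V, of A (C.get i) = of A v := by rw [← pick_eq]; exact hV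
  replace hS : ∑ i ∈ S, of A (C.get i) = of A s := by rw [← pick_eq]; exact hS
  have hT : ∑ i : Fin C.length, of A (C.get i) ≠ bot := by
    rw [← total_eq]; intro h0
    have h0' : A.sumList C = none := h0
    rw [h0'] at hC1
    simp at hC1
  rw [← splits_iff]
  set f : Fin C.length → A.Ext := fun i => of A (C.get i) with hf
  have split (X Y : Finset (Fin C.length)) : ∑ i ∈ X, f i =
      ∑ i ∈ X ∩ Y, f i + ∑ i ∈ X \ Y, f i := (Finset.sum_inter_add_sum_sdiff X Y f).symm
  let q (X : Finset (Fin C.length)) : A.Ext := ∑ i ∈ X, f i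
  have cong {X Y : Finset (Fin C.length)} (h : X = Y) : q X = q Y := by rw [h]
  have q3 (X Y Z : Finset (Fin C.length)) : q X = q (X ∩ Y ∩ Z) + q ((X ∩ Y) \ Z)
      + (q ((X \ Y) ∩ Z) + q ((X \ Y) \ Z)) :=
    (split X Y).trans (congrArg₂ _ (split _ Z) (split _ Z))
  have hu' : q (U ∩ V ∩ S) + q ((U ∩ V) \ S) + q ((U ∩ S) \ V) + q ((U \ V) \ S) = of A u := by
    rw [← hU]
    refine Eq.trans ?_ (q3 U V S).symm
    rw [cong (show (U \ V) ∩ S = (U ∩ S) \ V by ext; simp; tauto)]; abel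
  have hv' : q (U ∩ V ∩ S) + q ((V ∩ S) \ U) + q ((U ∩ V) \ S) + q ((V \ U) \ S) = of A v := by
    rw [← hV]
    refine Eq.trans ?_ (q3 V U S).symm
    rw [cong (show (V \ U) ∩ S = (V ∩ S) \ U by ext; simp; tauto), Finset.inter_comm V U]; abel
  have hs'' : q (U ∩ V ∩ S) + q ((V ∩ S) \ U) + q ((U ∩ S) \ V) + q ((S \ U) \ V) = of A s := by
    rw [← hS]
    refine Eq.trans ?_ (q3 S U V).symm
    rw [cong (show (S \ U) ∩ V = (V ∩ S) \ U by ext; simp; tauto), cong (show S ∩ U ∩ V = U ∩ V ∩ S by ext; simp; tauto),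
      Finset.inter_comm S U]; abel
  rw [← hu', ← hv']
  refine core hom _ _ _ _ _ (q ((S \ U) \ V)) _ _ k ?_ ?_ ?_
  · have hq : q Finset.univ ≠ bot := hT
    have e1 : q Finset.univ = q U + q Uᶜ := (Finset.sum_add_sum_compl U f).symm
    have e2 := q3 Uᶜ V S
    rw [cong (show Uᶜ ∩ V ∩ S = (V ∩ S) \ U by ext; simp; tauto),
      cong (show (Uᶜ ∩ V) \ S = (V \ U) \ S by ext; simp; tauto),
      cong (show (Uᶜ \ V) ∩ S = (S \ U) \ V by ext; simp; tauto)] at e2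
    have e3 : q U = of A u := hU
    refine ne_of_eq (z := q ((Uᶜ \ V) \ S)) hq ?_
    rw [e1, e2, e3, ← hu']; abel
  · rw [hv', hs'', hs']
  · rw [hu', hs'', hk]

theorem rdp_finset (h : A.RDP) {ι : Type} [DecidableEq ι] (f : ι → A.Ext) (S : Finset ι) :
    ∀ a k : A.Ext, ∑ i ∈ S, f i ≠ bot → a + k = ∑ i ∈ S, f i →
      ∃ g c : ι → A.Ext, (∀ i ∈ S, g i + c i = f i) ∧ ∑ i ∈ S, g i = a := by
  induction S using Finset.induction_on with
  | empty =>
    intro a k hd hk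
    refine ⟨0, 0, by simp, ?_⟩
    rw [Finset.sum_empty] at hk ⊢
    have hd1 : a + k ≠ bot := by rw [hk]; exact of_ne _
    -- a + k = 0 implies a = 0
    have key : a + of A A.one = of A A.one ∨ a + of A A.one = of A A.one := by
      left
      have h1 : a + k + of A A.one = of A A.one := by rw [hk, zero_add]
      have h2 : a + of A A.one ≠ bot := ne_of_eq (z := k) (of_ne A.one) (h1.symm.trans (by abel))
      obtain ⟨x, rfl⟩ := exists_of (ne_left hd1)
      obtain ⟨y, hy⟩ := exists_of h2
      rw [A.add_one x y hy, ← zero_def, zero_add]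
    refine (cancel (x := of A A.one) ?_ ?_).symm
    · rw [add_comm, or_self_iff.1 key]; exact of_ne _
    · rw [add_comm, or_self_iff.1 key, add_zero]
  | insert i S hi ih =>
    intro a k hd hk
    rw [Finset.sum_insert hi] at hd hk
    obtain ⟨a1, a2, c1, c2, rfl, h1, h2⟩ := rdp_iff.1 h a _ _ k hd hk
    obtain ⟨g, c, hg, hgs⟩ := ih a2 c2 (ne_left (add_comm _ (∑ i ∈ S, f i) ▸ hd)) h2
    refine ⟨Function.update g i a1, Function.update c i c1, ?_, ?_⟩
    · intro j hj
      by_cases hji : j = i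
      · subst hji; simpa using h1
      · simpa [hji] using hg j ((Finset.mem_insert.1 hj).resolve_left hji)
    · rw [Finset.sum_insert hi, Finset.sum_update_of_notMem hi, hgs]
      simp

theorem cover (h : A.RDP) (F : Finset E) : ∃ (ι : Type) (_ : Fintype ι) (_ : DecidableEq ι)
    (f : ι → A.Ext), ∑ i, f i = of A A.one ∧
      ∀ a ∈ F, ∃ S : Finset ι, ∑ i ∈ S, f i = of A a := by
  classical
  induction F using Finset.induction_on with
  | empty => exact ⟨Unit, inferInstance, inferInstance, fun _ => of A A.one, by simp, by simp⟩
  | insert a F ha ih =>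
    obtain ⟨ι, _, _, f, hf, hF⟩ := ih
    obtain ⟨k, hk⟩ := exists_compl (of_ne (A := A) a)
    obtain ⟨g, c, hgc, hg⟩ := rdp_finset h f Finset.univ (of A a) k
      (hf ▸ of_ne _) (hk.trans hf.symm)
    have hsum (S : Finset ι) : ∑ i ∈ S.disjSum S, Sum.elim g c i = ∑ i ∈ S, f i := by
      rw [Finset.sum_disjSum]
      simp only [Sum.elim_inl, Sum.elim_inr]
      rw [← Finset.sum_add_distrib]
      exact Finset.sum_congr rfl fun i _ => hgc i (Finset.mem_univ i)
    refine ⟨ι ⊕ ι, inferInstance, inferInstance, Sum.elim g c, ?_, ?_⟩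
    · rw [← hf, ← hsum, Finset.univ_disjSum_univ]
    · intro b hb
      rcases Finset.mem_insert.1 hb with rfl | hb
      · refine ⟨Finset.univ.disjSum ∅, ?_⟩
        rw [Finset.sum_disjSum]
        simpa using hg
      · obtain ⟨S, hS⟩ := hF b hb
        exact ⟨S.disjSum S, (hsum S).trans hS⟩

theorem forward (h : A.RDP) : A.Compatible Set.univ := by
  classical
  intro F _
  obtain ⟨ι, _, _, f, hf, hF⟩ := cover h F
  have hne (i : ι) : f i ≠ bot := by
    refine ne_of_eq (of_ne A.one) (z := ∑ j ∈ Finset.univ.erase i, f j) ?_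
    rw [← hf, Finset.add_sum_erase _ _ (Finset.mem_univ i)]
  choose p hp using fun i => exists_of (hne i)
  obtain ⟨C, e, he⟩ : ∃ (C : List E) (e : Fin C.length ≃ ι), ∀ j, C.get j = p (e j) := by
    refine ⟨List.ofFn (fun j => p ((Fintype.equivFin ι).symm j)),
      (finCongr (by simp)).trans (Fintype.equivFin ι).symm, ?_⟩
    intro j
    simp
    rfl
  refine ⟨C, fun _ _ => Set.mem_univ _, ?_, ?_⟩
  · have : mk A (A.sumList C) = of A A.one := by
      rw [total_eq, ← hf, ← Equiv.sum_comp e]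
      exact Finset.sum_congr rfl fun j _ => by rw [he, hp]
    have h2 : A.sumList C = some A.one := this
    rw [h2]; rfl
  · intro a ha
    obtain ⟨S, hS⟩ := hF a (by simpa using ha)
    refine ⟨S.map e.symm.toEmbedding, ?_⟩
    change mk A (A.sumList _) = of A a
    rw [pick_eq, Finset.sum_map, ← hS]
    exact Finset.sum_congr rfl fun j _ => by rw [he, hp]; simp

end Ext

end EffectAlgebra

/-- `E` satisfies the Riesz decomposition property iff `E` is
homogeneous and compatible. -/
theorem rdp_iff_homogeneous_and_compatible {E : Type*} (A : EffectAlgebra E) :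
    A.RDP ↔ (A.Homogeneous ∧ A.Compatible Set.univ) := by
  constructor
  · intro h
    exact ⟨fun u v w s hs hu _ => h u v w s hs hu, EffectAlgebra.Ext.forward h⟩
  · rintro ⟨h1, h2⟩
    exact EffectAlgebra.Ext.backward h1 h2
end

section
/- Let E be a homogeneous effect algebra and let F be a sub-effect algebra of E such that F = F̄, where the closure F̄ is taken in E. Then F (with the restricted partial operation) is a homogeneous effect algebra. -/
theorem EffectAlgebra.le_tr {E : Type*} (A : EffectAlgebra E) {a b c : E}
    (h : A.le a b) (k : A.le b c) : A.le a c := by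
  obtain ⟨x, hx⟩ := h
  obtain ⟨y, hy⟩ := k
  obtain ⟨z, _, hz⟩ := A.assoc _ _ _ _ _ hx hy
  exact ⟨z, hz⟩

theorem EffectAlgebra.oplus_compl {E : Type*} (A : EffectAlgebra E) (a : E) :
    A.oplus a (A.compl a) = some A.one :=
  Classical.epsilon_spec (p := fun b => A.oplus a b = some A.one) (A.compl_exists a)

theorem EffectAlgebra.compl_le {E : Type*} (A : EffectAlgebra E) {a b s : E}
    (h : A.oplus a b = some s) : A.le (A.compl s) (A.compl a) := by
  obtain ⟨t, ht, h1⟩ := A.assoc _ _ _ _ _ h (A.oplus_compl s)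
  have e := A.compl_unique _ _ _ h1 (A.oplus_compl a)
  subst e
  exact ⟨b, by rw [A.comm]; exact ht⟩

/-- A sub-effect algebra `F` of a homogeneous effect algebra with
`F = F̄` is homogeneous. -/
theorem closed_subalgebra_homogeneous {E : Type*} (A : EffectAlgebra E)
    (hH : A.Homogeneous) (F : Set E) (hF : A.IsSubEA F)
    (hcl : F = A.closure F) :
    A.HomogeneousOn F := by
  intro u v₁ v₂ s _ hv₁ hv₂ hs hus hus'
  obtain ⟨u₁, u₂, h₁, h₂, hu⟩ := hH u v₁ v₂ s hs hus hus'
  have key : ∀ x y, y ∈ F → A.le x y → A.le x (A.compl y) → x ∈ F := by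
    intro x y hy hxy hxy'
    rw [hcl]
    exact Set.mem_iUnion.2 ⟨1, Or.inl ⟨y, hy, hxy, hxy'⟩⟩
  have hs2 : A.oplus v₂ v₁ = some s := by rw [A.comm]; exact hs
  have hu2 : A.oplus u₂ u₁ = some u := by rw [A.comm]; exact hu
  exact ⟨u₁, u₂,
    key _ _ hv₁ h₁ (A.le_tr (A.le_tr ⟨_, hu⟩ hus') (A.compl_le hs)),
    key _ _ hv₂ h₂ (A.le_tr (A.le_tr ⟨_, hu2⟩ hus') (A.compl_le hs2)), h₁, h₂, hu⟩
end
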